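/- The distribution of √n(β̃ − β) under P_{n,β,σ} equals the distribution of B_n√n β₂ + C_n√n Z₁ + [1 + exp(2αk₂) exp(−α‖Z₂ + (X₂'(I−P_R)X₂)^{1/2}β₂‖²/σ²)]⁻¹ · (D_n√n Z₂ − B_n√n β₂), where Z₁ ~ N(0, σ²I_{k₁}) and Z₂ ~ N(0, σ²I_{k₂}) are independent. -/

import Mathlib

open MeasureTheory Matrix Real Filter Topology ENNReal NNReal

noncomputable section

/-- Euclidean norm of a finite tuple. -/
def enorm2 {ι : Type*} [Fintype ι] (v : ι → ℝ) : ℝ := Real.sqrt (∑ i, v i ^ 2)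

/-- The `N(0, σ² I)` distribution on `ι → ℝ`, given by its Lebesgue density. -/
def gaussPi (ι : Type*) [Fintype ι] (σ2 : ℝ) : Measure (ι → ℝ) :=
  volume.withDensity fun x => ENNReal.ofReal
    ((2 * π * σ2) ^ (-(Fintype.card ι : ℝ) / 2) * Real.exp (-(enorm2 x) ^ 2 / (2 * σ2)))

/-- The Lebesgue density of the `N(0, σ² Q⁻¹)` distribution on `ι → ℝ`
(for `Q` symmetric positive definite). -/
def gaussCovDens {ι : Type*} [Fintype ι] [DecidableEq ι] (σ2 : ℝ) (Q : Matrix ι ι ℝ)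
    (x : ι → ℝ) : ℝ :=
  (2 * π * σ2) ^ (-(Fintype.card ι : ℝ) / 2) * Real.sqrt Q.det *
    Real.exp (-(x ⬝ᵥ Q.mulVec x) / (2 * σ2))

/-- The `N(0, σ² Q⁻¹)` distribution on `ι → ℝ` (for `Q` symmetric positive definite),
given by its Lebesgue density. -/
def gaussCov {ι : Type*} [Fintype ι] [DecidableEq ι] (σ2 : ℝ) (Q : Matrix ι ι ℝ) :
    Measure (ι → ℝ) :=
  volume.withDensity fun x => ENNReal.ofReal (gaussCovDens σ2 Q x)

open scoped ComplexOrder in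
/-- The positive semidefinite square root of a positive semidefinite matrix
(Mathlib's former `Matrix.PosSemidef.sqrt`). -/
def Matrix.PosSemidef.sqrt {m 𝕜 : Type*} [Fintype m] [RCLike 𝕜] [DecidableEq m]
    {A : Matrix m m 𝕜} (hA : A.PosSemidef) : Matrix m m 𝕜 :=
  hA.1.eigenvectorUnitary.1 * diagonal ((↑) ∘ Real.sqrt ∘ hA.1.eigenvalues) *
    (star hA.1.eigenvectorUnitary : Matrix m m 𝕜)

open Classical in
/-- Symmetric positive semidefinite square root (junk value `0` off the psd cone). -/
def msqrt {ι : Type*} [Fintype ι] [DecidableEq ι] (A : Matrix ι ι ℝ) : Matrix ι ι ℝ :=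
  if h : A.PosSemidef then h.sqrt else 0

open Classical in
/-- Smallest eigenvalue of a symmetric matrix (junk value `0` otherwise). -/
def lamMin {ι : Type*} [Fintype ι] [DecidableEq ι] (A : Matrix ι ι ℝ) : ℝ :=
  if h : A.IsHermitian then ⨅ i, h.eigenvalues i else 0

open Classical in
/-- Largest eigenvalue of a symmetric matrix (junk value `0` otherwise). -/
def lamMax {ι : Type*} [Fintype ι] [DecidableEq ι] (A : Matrix ι ι ℝ) : ℝ :=
  if h : A.IsHermitian then ⨆ i, h.eigenvalues i else 0

variable {n k₁ k₂ : ℕ}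

/-- First block of columns of the design matrix. -/
def X1 (X : Matrix (Fin n) (Fin k₁ ⊕ Fin k₂) ℝ) : Matrix (Fin n) (Fin k₁) ℝ :=
  X.submatrix id Sum.inl

/-- Second block of columns of the design matrix. -/
def X2 (X : Matrix (Fin n) (Fin k₁ ⊕ Fin k₂) ℝ) : Matrix (Fin n) (Fin k₂) ℝ :=
  X.submatrix id Sum.inr

/-- Unrestricted least squares estimator. -/
def betaU (X : Matrix (Fin n) (Fin k₁ ⊕ Fin k₂) ℝ) (Y : Fin n → ℝ) : (Fin k₁ ⊕ Fin k₂) → ℝ :=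
  (Xᵀ * X)⁻¹.mulVec (Xᵀ.mulVec Y)

/-- Restricted least squares estimator. -/
def betaR (X : Matrix (Fin n) (Fin k₁ ⊕ Fin k₂) ℝ) (Y : Fin n → ℝ) : (Fin k₁ ⊕ Fin k₂) → ℝ :=
  Sum.elim (((X1 X)ᵀ * X1 X)⁻¹.mulVec ((X1 X)ᵀ.mulVec Y)) (fun _ => 0)

/-- Risk estimate of the restricted model. -/
def rR (X : Matrix (Fin n) (Fin k₁ ⊕ Fin k₂) ℝ) (σ2 : ℝ) (Y : Fin n → ℝ) : ℝ :=
  Y ⬝ᵥ Y - betaR X Y ⬝ᵥ (Xᵀ * X).mulVec (betaR X Y) + σ2 * (2 * k₁ - n)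

/-- Risk estimate of the unrestricted model. -/
def rU (X : Matrix (Fin n) (Fin k₁ ⊕ Fin k₂) ℝ) (σ2 : ℝ) (Y : Fin n → ℝ) : ℝ :=
  Y ⬝ᵥ Y - betaU X Y ⬝ᵥ (Xᵀ * X).mulVec (betaU X Y) + σ2 * (2 * (k₁ + k₂) - n)

/-- The model averaging weight `λ̂`. -/
def lamHat (α σ2 : ℝ) (X : Matrix (Fin n) (Fin k₁ ⊕ Fin k₂) ℝ) (Y : Fin n → ℝ) : ℝ :=
  Real.exp (-(α * rR X σ2 Y) / σ2) /
    (Real.exp (-(α * rR X σ2 Y) / σ2) + Real.exp (-(α * rU X σ2 Y) / σ2))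

/-- Leung and Barron's model averaging estimator `β̃`. -/
def mavg (α σ2 : ℝ) (X : Matrix (Fin n) (Fin k₁ ⊕ Fin k₂) ℝ) (Y : Fin n → ℝ) :
    (Fin k₁ ⊕ Fin k₂) → ℝ :=
  lamHat α σ2 X Y • betaR X Y + (1 - lamHat α σ2 X Y) • betaU X Y

/-- Projection on the column space of `X₁`. -/
def projR (X : Matrix (Fin n) (Fin k₁ ⊕ Fin k₂) ℝ) : Matrix (Fin n) (Fin n) ℝ :=
  X1 X * ((X1 X)ᵀ * X1 X)⁻¹ * (X1 X)ᵀ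

/-- Projection on the column space of `X`. -/
def projU (X : Matrix (Fin n) (Fin k₁ ⊕ Fin k₂) ℝ) : Matrix (Fin n) (Fin n) ℝ :=
  X * (Xᵀ * X)⁻¹ * Xᵀ

/-- The distribution `P_{n,β,σ}` of `Y = Xβ + u`, `u ~ N(0, σ² Iₙ)`. -/
def Pmeas (X : Matrix (Fin n) (Fin k₁ ⊕ Fin k₂) ℝ) (β : (Fin k₁ ⊕ Fin k₂) → ℝ) (σ2 : ℝ) :
    Measure (Fin n → ℝ) :=
  (gaussPi (Fin n) σ2).map (fun u => X.mulVec β + u)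

/-- The function `h_{a,b}(ξ) = ξ / (1 + a exp(−ξ²/b))`. -/
def hfun (a b ξ : ℝ) : ℝ := ξ / (1 + a * Real.exp (-ξ ^ 2 / b))

/-- The inverse `g_{a,b}` of `h_{a,b}`. -/
def gfun (a b : ℝ) : ℝ → ℝ := Function.invFun (hfun a b)

open Classical in
/-- `g(‖w‖) w / ‖w‖`, with the convention that this is `0` for `w = 0`. -/
def gdir (a b : ℝ) {ι : Type*} [Fintype ι] (w : ι → ℝ) : ι → ℝ :=
  if w = 0 then 0 else (gfun a b (enorm2 w) / enorm2 w) • w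


/-- The finite-sample density `f_{n,β,σ}` of `√n(β̃ − β)` (Theorem 3 of the paper). -/
def fdens {n k₁ k₂ : ℕ} (X : Matrix (Fin n) (Fin k₁ ⊕ Fin k₂) ℝ)
    (β : (Fin k₁ ⊕ Fin k₂) → ℝ) (σ2 α : ℝ) (t : (Fin k₁ ⊕ Fin k₂) → ℝ) : ℝ :=
  let a := Real.exp (2 * α * k₂)
  let b := σ2 / α
  let S := (X2 X)ᵀ * (1 - projR X) * X2 X
  let w := (Real.sqrt n)⁻¹ • (msqrt S).mulVec ((t ∘ Sum.inr) + Real.sqrt n • (β ∘ Sum.inr))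
  (2 * π * σ2) ^ (-((k₁ : ℝ) + k₂) / 2) * Real.sqrt (((n : ℝ)⁻¹ • (Xᵀ * X)).det) *
    Real.exp (-(enorm2 ((Real.sqrt n)⁻¹ •
        ((msqrt ((X1 X)ᵀ * X1 X)).mulVec (t ∘ Sum.inl) +
          ((msqrt ((X1 X)ᵀ * X1 X))⁻¹ * (X1 X)ᵀ * X2 X).mulVec (t ∘ Sum.inr)))) ^ 2 /
      (2 * σ2)) *
    (1 + Real.exp (-(α / σ2) * gfun a b (enorm2 w) ^ 2 + 2 * α * k₂)) ^ (k₂ : ℕ) *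
    (1 + (2 * α / σ2) * gfun a b (enorm2 w) ^ 2 *
        (1 + Real.exp ((α / σ2) * gfun a b (enorm2 w) ^ 2 - 2 * α * k₂))⁻¹)⁻¹ *
    Real.exp (-(enorm2 (gdir a b w - (msqrt S).mulVec (β ∘ Sum.inr))) ^ 2 / (2 * σ2))

/-- The density `f_{∞,γ}` of the limiting distribution (formula (13) of the paper),
stated for a general symmetric positive definite matrix in place of `Q`. -/
def fInfty {k₁ k₂ : ℕ} (Q : Matrix (Fin k₁ ⊕ Fin k₂) (Fin k₁ ⊕ Fin k₂) ℝ) (σ2 α : ℝ)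
    (γ : Fin k₂ → ℝ) (t : (Fin k₁ ⊕ Fin k₂) → ℝ) : ℝ :=
  let a := Real.exp (2 * α * k₂)
  let b := σ2 / α
  let S := Q.toBlocks₂₂ - Q.toBlocks₂₁ * Q.toBlocks₁₁⁻¹ * Q.toBlocks₁₂
  let w := (msqrt S).mulVec ((t ∘ Sum.inr) + γ)
  (2 * π * σ2) ^ (-((k₁ : ℝ) + k₂) / 2) * Real.sqrt Q.det *
    Real.exp (-(enorm2 ((msqrt Q.toBlocks₁₁).mulVec (t ∘ Sum.inl) +
        ((msqrt Q.toBlocks₁₁)⁻¹ * Q.toBlocks₁₂).mulVec (t ∘ Sum.inr))) ^ 2 / (2 * σ2)) *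
    (1 + Real.exp (-(α / σ2) * gfun a b (enorm2 w) ^ 2 + 2 * α * k₂)) ^ (k₂ : ℕ) *
    (1 + (2 * α / σ2) * gfun a b (enorm2 w) ^ 2 *
        (1 + Real.exp ((α / σ2) * gfun a b (enorm2 w) ^ 2 - 2 * α * k₂))⁻¹)⁻¹ *
    Real.exp (-(enorm2 (gdir a b w - (msqrt S).mulVec γ)) ^ 2 / (2 * σ2))


lemma aux_adj {m l : Type*} [Fintype m] [Fintype l] (A : Matrix m l ℝ) (x : m → ℝ) (y : l → ℝ) :
    (Aᵀ.mulVec x) ⬝ᵥ y = x ⬝ᵥ A.mulVec y := by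
  rw [mulVec_transpose, dotProduct_mulVec]

lemma aux_gauss_dens {ι : Type*} [Fintype ι] (σ : ℝ) (hσ : 0 < σ) (x : ι → ℝ) :
    (2 * π * σ ^ 2) ^ (-(Fintype.card ι : ℝ) / 2) * Real.exp (-(enorm2 x) ^ 2 / (2 * σ ^ 2)) =
      ∏ i, ProbabilityTheory.gaussianPDFReal 0 (Real.toNNReal (σ ^ 2)) (x i) := by
  have h0 : 0 < 2 * π * σ ^ 2 := by positivity
  have h1 : enorm2 x ^ 2 = ∑ i, x i ^ 2 := by
    unfold enorm2
    rw [Real.sq_sqrt (Finset.sum_nonneg fun i _ => sq_nonneg _)]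
  simp only [ProbabilityTheory.gaussianPDFReal_def, Real.coe_toNNReal _ (sq_nonneg σ)]
  rw [Finset.prod_mul_distrib, ← Real.exp_sum, h1]
  congr 1
  · rw [Finset.prod_const, Finset.card_univ, Real.sqrt_eq_rpow, ← Real.rpow_neg h0.le,
      ← Real.rpow_mul_natCast h0.le]
    congr 1
    ring
  · rw [← Finset.sum_div]
    simp

lemma aux_gaussPi_eq {ι : Type*} [Fintype ι] (σ : ℝ) (hσ : 0 < σ) :
    gaussPi ι (σ ^ 2) =
      Measure.pi fun _ : ι => ProbabilityTheory.gaussianReal 0 (Real.toNNReal (σ ^ 2)) := by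
  have hv : Real.toNNReal (σ ^ 2) ≠ 0 := by
    simp only [ne_eq, Real.toNNReal_eq_zero, not_le]; positivity
  symm
  apply Measure.pi_eq
  intro s hs
  unfold gaussPi
  simp_rw [aux_gauss_dens σ hσ]
  rw [withDensity_apply _ (MeasurableSet.univ_pi hs), volume_pi, Measure.restrict_pi_pi,
    ← ofReal_integral_eq_lintegral_ofReal]
  · rw [integral_fintype_prod_eq_prod, ENNReal.ofReal_prod_of_nonneg]
    · refine Finset.prod_congr rfl fun i _ => ?_
      rw [ProbabilityTheory.gaussianReal_apply_eq_integral _ hv]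
    · intro i _
      exact integral_nonneg fun x => ProbabilityTheory.gaussianPDFReal_nonneg _ _ _
  · exact Integrable.fintype_prod fun i =>
      (ProbabilityTheory.integrable_gaussianPDFReal _ _).restrict
  · exact Filter.Eventually.of_forall fun x => Finset.prod_nonneg fun i _ =>
      ProbabilityTheory.gaussianPDFReal_nonneg _ _ _

lemma aux_charFun {ι : Type*} [Fintype ι] [DecidableEq ι] (σ : ℝ) (hσ : 0 < σ)
    (L : StrongDual ℝ (ι → ℝ)) :
    charFunDual (gaussPi ι (σ ^ 2)) L =
      Complex.exp (((-(σ ^ 2 * ∑ i, (L (Pi.single i 1)) ^ 2 / 2) : ℝ)) : ℂ) := by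
  rw [aux_gaussPi_eq σ hσ, charFunDual_pi, Finset.mul_sum, ← Finset.sum_neg_distrib,
    Complex.ofReal_sum, Complex.exp_sum]
  refine Finset.prod_congr rfl fun i _ => ?_
  rw [charFunDual_eq_charFun_map_one]
  have : (⇑(L.comp (ContinuousLinearMap.single ℝ (fun _ : ι => ℝ) i))) =
      fun x => L (Pi.single i 1) * x := by
    ext x
    have hx : (Pi.single i x : ι → ℝ) = x • Pi.single i 1 := by
      rw [← Pi.single_smul]; simp
    simp [hx, mul_comm]
  rw [this, ProbabilityTheory.gaussianReal_map_const_mul, ProbabilityTheory.charFun_gaussianReal]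
  congr 1
  push_cast
  simp [Real.coe_toNNReal _ (sq_nonneg σ)]
  ring

instance aux_prob {ι : Type*} [Fintype ι] (σ : ℝ) [Fact (0 < σ)] :
    IsProbabilityMeasure (gaussPi ι (σ ^ 2)) := by
  rw [aux_gaussPi_eq σ Fact.out]; infer_instance

lemma aux_map {ι κ ν : Type*} [Fintype ι] [DecidableEq ι] [Fintype κ] [DecidableEq κ]
    [Fintype ν] [DecidableEq ν] (σ : ℝ) (hσ : 0 < σ)
    (T1 : Matrix ι ν ℝ) (T2 : Matrix κ ν ℝ) (h11 : T1 * T1ᵀ = 1) (h22 : T2 * T2ᵀ = 1)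
    (h12 : T1 * T2ᵀ = 0) :
    (gaussPi ν (σ ^ 2)).map (fun u => (T1.mulVec u, T2.mulVec u)) =
      (gaussPi ι (σ ^ 2)).prod (gaussPi κ (σ ^ 2)) := by
  have : Fact (0 < σ) := ⟨hσ⟩
  let Φ : (ν → ℝ) →L[ℝ] (ι → ℝ) × (κ → ℝ) :=
    LinearMap.toContinuousLinearMap (T1.mulVecLin.prod T2.mulVecLin)
  have hΦ : (fun u => (T1.mulVec u, T2.mulVec u)) = ⇑Φ := by
    ext u <;> rfl
  rw [hΦ]
  have : IsProbabilityMeasure ((gaussPi ν (σ ^ 2)).map Φ) :=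
    Measure.isProbabilityMeasure_map (by fun_prop)
  apply Measure.ext_of_charFunDual
  funext L
  rw [charFunDual_map, charFunDual_prod, aux_charFun σ hσ, aux_charFun σ hσ, aux_charFun σ hσ,
    ← Complex.exp_add, ← Complex.ofReal_add]
  congr 2
  set a : ι → ℝ := fun i => L (Pi.single i 1, 0) with ha
  set b : κ → ℝ := fun i => L (0, Pi.single i 1) with hb
  have hL : ∀ x y, L (x, y) = a ⬝ᵥ x + b ⬝ᵥ y := by
    intro x y
    have h1 : (x, y) = ∑ i, x i • ((Pi.single i 1, 0) : (ι → ℝ) × (κ → ℝ)) +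
        ∑ i, y i • ((0, Pi.single i 1) : (ι → ℝ) × (κ → ℝ)) := by
      ext j <;> simp [Prod.fst_sum, Prod.snd_sum, Finset.sum_apply, Pi.single_apply]
    rw [h1, map_add, map_sum, map_sum]
    simp only [map_smul, dotProduct, ha, hb, smul_eq_mul, mul_comm]
  have e1 : ∀ m, (L.comp Φ) (Pi.single m 1) = (T1ᵀ.mulVec a + T2ᵀ.mulVec b) m := by
    intro m
    have : (L.comp Φ) (Pi.single m 1) = L (T1.mulVec (Pi.single m 1), T2.mulVec (Pi.single m 1)) :=
      rfl
    rw [this, hL, dotProduct_mulVec, dotProduct_mulVec]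
    simp [mulVec_transpose]
  have e2 : ∑ m, ((L.comp Φ) (Pi.single m 1)) ^ 2 = ∑ i, a i ^ 2 + ∑ i, b i ^ 2 := by
    simp_rw [e1]
    have h21 : T2 * T1ᵀ = 0 := by
      have := congrArg transpose h12
      simpa using this
    have key : (T1ᵀ.mulVec a + T2ᵀ.mulVec b) ⬝ᵥ (T1ᵀ.mulVec a + T2ᵀ.mulVec b)
        = a ⬝ᵥ a + b ⬝ᵥ b := by
      rw [add_dotProduct, aux_adj, aux_adj, mulVec_add, mulVec_add]
      simp only [mulVec_mulVec, h11, h22, h12, h21]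
      simp
    simpa [dotProduct, sq] using key
  have e3 : ∀ i, (L.comp (ContinuousLinearMap.inl ℝ (ι → ℝ) (κ → ℝ))) (Pi.single i 1) = a i :=
    fun i => rfl
  have e4 : ∀ i, (L.comp (ContinuousLinearMap.inr ℝ (ι → ℝ) (κ → ℝ))) (Pi.single i 1) = b i :=
    fun i => rfl
  simp_rw [← Finset.sum_div]
  rw [e2]
  simp_rw [e3, e4]
  ring

lemma aux_msqrt {ι : Type*} [Fintype ι] [DecidableEq ι] {S : Matrix ι ι ℝ} (hS : S.PosDef) :
    (msqrt S)ᵀ = msqrt S ∧ msqrt S * msqrt S = S ∧ msqrt S * (msqrt S)⁻¹ = 1 ∧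
      (msqrt S)⁻¹ * msqrt S = 1 := by
  have h := hS.posSemidef
  have e : msqrt S = h.sqrt := by simp [msqrt, h]
  have h1 : (msqrt S)ᵀ = msqrt S := by
    rw [e, Matrix.PosSemidef.sqrt]
    simp [transpose_mul, Matrix.mul_assoc, star_eq_conjTranspose, conjTranspose_eq_transpose_of_trivial]
  have h2 : msqrt S * msqrt S = S := by
    rw [e, Matrix.PosSemidef.sqrt]
    set U := h.1.eigenvectorUnitary
    have hU : (star U : Matrix ι ι ℝ) * (U : Matrix ι ι ℝ) = 1 := by simp
    have hsp := h.1.spectral_theorem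
    have hD : (diagonal (((↑) : ℝ → ℝ) ∘ Real.sqrt ∘ h.1.eigenvalues) : Matrix ι ι ℝ) *
        diagonal (((↑) : ℝ → ℝ) ∘ Real.sqrt ∘ h.1.eigenvalues) = diagonal h.1.eigenvalues := by
      rw [diagonal_mul_diagonal]
      congr 1; funext i
      simpa using Real.mul_self_sqrt (h.eigenvalues_nonneg i)
    conv_rhs => rw [hsp]
    rw [Unitary.conjStarAlgAut_apply]
    have hD' : (diagonal ((RCLike.ofReal : ℝ → ℝ) ∘ h.1.eigenvalues) : Matrix ι ι ℝ) =
      diagonal h.1.eigenvalues := rfl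
    rw [hD', ← hD]
    simp only [Matrix.mul_assoc]
    rw [← Matrix.mul_assoc _ (U : Matrix ι ι ℝ), hU, Matrix.one_mul]
    rfl
  have h3 : IsUnit (msqrt S).det := by
    have : (msqrt S).det * (msqrt S).det = S.det := by rw [← det_mul, h2]
    have := hS.det_pos
    refine isUnit_iff_ne_zero.2 fun h0 => ?_
    simp_all
  exact ⟨h1, h2, mul_nonsing_inv _ h3, nonsing_inv_mul _ h3⟩

section
variable {n k₁ k₂ : ℕ} (X : Matrix (Fin n) (Fin k₁ ⊕ Fin k₂) ℝ)

lemma aux_X_mulVec (a : Fin k₁ → ℝ) (b : Fin k₂ → ℝ) :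
    X.mulVec (Sum.elim a b) = (X1 X).mulVec a + (X2 X).mulVec b := by
  ext i; simp [mulVec, dotProduct, X1, X2]

lemma aux_Xt_mulVec (y : Fin n → ℝ) :
    Xᵀ.mulVec y = Sum.elim ((X1 X)ᵀ.mulVec y) ((X2 X)ᵀ.mulVec y) := by
  ext i; cases i <;> simp [mulVec, dotProduct, X1, X2]

lemma aux_inj (hX : X.rank = k₁ + k₂) : Function.Injective X.mulVec := by
  have h := LinearMap.finrank_range_add_finrank_ker X.mulVecLin
  have h2 : Module.finrank ℝ (LinearMap.range X.mulVecLin) = k₁ + k₂ := hX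
  rw [h2] at h
  simp at h
  exact LinearMap.ker_eq_bot.1 h

lemma aux_posDef1 {ι κ : Type*} [Fintype ι] [Fintype κ] (A : Matrix ι κ ℝ)
    (h : Function.Injective A.mulVec) : (Aᵀ * A).PosDef := by
  simpa [conjTranspose_eq_transpose_of_trivial] using Matrix.PosDef.conjTranspose_mul_self A h

lemma aux_X1_inj (hX : X.rank = k₁ + k₂) : Function.Injective (X1 X).mulVec := by
  intro a b hab
  have := aux_inj X hX (a₁ := Sum.elim a 0) (a₂ := Sum.elim b 0)
    (by simpa [aux_X_mulVec] using hab)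
  funext i
  simpa using congrFun this (Sum.inl i)

lemma aux_inv {ι : Type*} [Fintype ι] [DecidableEq ι] {S : Matrix ι ι ℝ} (hS : S.PosDef) :
    S * S⁻¹ = 1 ∧ S⁻¹ * S = 1 := by
  have h : IsUnit S.det := isUnit_iff_ne_zero.2 hS.det_pos.ne'
  exact ⟨mul_nonsing_inv _ h, nonsing_inv_mul _ h⟩

lemma aux_P_transpose : (projR X)ᵀ = projR X := by
  simp [projR, transpose_mul, Matrix.mul_assoc, transpose_nonsing_inv]

lemma aux_X1t_P (hX : X.rank = k₁ + k₂) : (X1 X)ᵀ * projR X = (X1 X)ᵀ := by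
  have h := (aux_inv (aux_posDef1 _ (aux_X1_inj X hX))).1
  rw [projR, ← Matrix.mul_assoc, ← Matrix.mul_assoc, h, Matrix.one_mul]

lemma aux_P_X1 (hX : X.rank = k₁ + k₂) : projR X * X1 X = X1 X := by
  have := congrArg transpose (aux_X1t_P X hX)
  simpa [transpose_mul, aux_P_transpose] using this

lemma aux_P_P (hX : X.rank = k₁ + k₂) : projR X * projR X = projR X := by
  conv_lhs => enter [2]; rw [projR]
  rw [← Matrix.mul_assoc, ← Matrix.mul_assoc, aux_P_X1 X hX]
  rfl

lemma aux_MM (hX : X.rank = k₁ + k₂) :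
    (1 - projR X) * (1 - projR X) = 1 - projR X := by
  simp [Matrix.sub_mul, Matrix.mul_sub, aux_P_P X hX]

lemma aux_Mt : (1 - projR X)ᵀ = 1 - projR X := by
  simp [aux_P_transpose]

lemma aux_S_eq (hX : X.rank = k₁ + k₂) : (X2 X)ᵀ * (1 - projR X) * X2 X =
    ((1 - projR X) * X2 X)ᵀ * ((1 - projR X) * X2 X) := by
  rw [transpose_mul, aux_Mt, Matrix.mul_assoc, Matrix.mul_assoc,
    ← Matrix.mul_assoc (1 - projR X) (1 - projR X), aux_MM X hX]

lemma aux_S_posDef (hX : X.rank = k₁ + k₂) :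
    ((X2 X)ᵀ * (1 - projR X) * X2 X).PosDef := by
  rw [aux_S_eq X hX]
  apply aux_posDef1
  intro a b hab
  have h0 : ((1 - projR X) * X2 X).mulVec (a - b) = 0 := by
    rw [mulVec_sub]; exact sub_eq_zero.2 hab
  apply sub_eq_zero.1
  generalize a - b = c at h0 ⊢
  have h1 : X.mulVec (Sum.elim
      (-((((X1 X)ᵀ * X1 X)⁻¹ * (X1 X)ᵀ * X2 X).mulVec c)) c) = 0 := by
    rw [aux_X_mulVec, mulVec_neg, mulVec_mulVec, ← h0, Matrix.sub_mul, sub_mulVec, projR]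
    simp only [Matrix.mul_assoc, Matrix.one_mul]
    abel
  have h2 := aux_inj X hX (h1.trans (mulVec_zero X).symm)
  funext i
  simpa using congrFun h2 (Sum.inr i)

lemma aux_betaU (hX : X.rank = k₁ + k₂) (Y : Fin n → ℝ) (q : Fin k₂ → ℝ)
    (hq : ((X2 X)ᵀ * (1 - projR X) * X2 X).mulVec q =
      ((X2 X)ᵀ * (1 - projR X)).mulVec Y) :
    betaU X Y = Sum.elim ((((X1 X)ᵀ * X1 X)⁻¹ * (X1 X)ᵀ).mulVec Y -
        (((X1 X)ᵀ * X1 X)⁻¹ * (X1 X)ᵀ * X2 X).mulVec q) q ∧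
      X.mulVec (betaU X Y) = (projR X).mulVec Y + ((1 - projR X) * X2 X).mulVec q := by
  set v := Sum.elim ((((X1 X)ᵀ * X1 X)⁻¹ * (X1 X)ᵀ).mulVec Y -
        (((X1 X)ᵀ * X1 X)⁻¹ * (X1 X)ᵀ * X2 X).mulVec q) q with hv
  have hXv : X.mulVec v = (projR X).mulVec Y + ((1 - projR X) * X2 X).mulVec q := by
    rw [hv, aux_X_mulVec, mulVec_sub, mulVec_mulVec, mulVec_mulVec, Matrix.sub_mul, sub_mulVec,
      projR]
    simp only [Matrix.mul_assoc, Matrix.one_mul]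
    abel
  have h1 : (Xᵀ * X).mulVec v = Xᵀ.mulVec Y := by
    rw [← mulVec_mulVec, hXv, aux_Xt_mulVec, aux_Xt_mulVec]
    congr 1
    · rw [mulVec_add, mulVec_mulVec, mulVec_mulVec, aux_X1t_P X hX, ← Matrix.mul_assoc,
        Matrix.mul_sub, aux_X1t_P X hX]
      simp
    · rw [mulVec_add, mulVec_mulVec, mulVec_mulVec, ← Matrix.mul_assoc, hq, Matrix.mul_sub,
        sub_mulVec]
      simp
  have h2 : betaU X Y = v := by
    rw [betaU, ← h1, mulVec_mulVec, (aux_inv (aux_posDef1 X (aux_inj X hX))).2, one_mulVec]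
  exact ⟨h2, by rw [h2, hXv]⟩

lemma aux_XbetaR (Y : Fin n → ℝ) : X.mulVec (betaR X Y) = (projR X).mulVec Y := by
  have : betaR X Y = Sum.elim (((X1 X)ᵀ * X1 X)⁻¹.mulVec ((X1 X)ᵀ.mulVec Y)) 0 := rfl
  rw [this, aux_X_mulVec]
  simp [projR, mulVec_mulVec, Matrix.mul_assoc]

lemma aux_quad (b : Fin k₁ ⊕ Fin k₂ → ℝ) :
    b ⬝ᵥ (Xᵀ * X).mulVec b = X.mulVec b ⬝ᵥ X.mulVec b := by
  rw [← mulVec_mulVec, dotProduct_comm, aux_adj]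

/-- The difference of the risk estimates. -/
lemma aux_risk (hX : X.rank = k₁ + k₂) (σ2 : ℝ) (Y : Fin n → ℝ) (z : Fin k₂ → ℝ)
    (hz : (msqrt ((X2 X)ᵀ * (1 - projR X) * X2 X)).mulVec z =
      ((X2 X)ᵀ * (1 - projR X)).mulVec Y) :
    rR X σ2 Y - rU X σ2 Y = enorm2 z ^ 2 - 2 * σ2 * k₂ := by
  obtain ⟨t1, t2, t3, t4⟩ := aux_msqrt (aux_S_posDef X hX)
  set R := msqrt ((X2 X)ᵀ * (1 - projR X) * X2 X)
  have hSq : ((X2 X)ᵀ * (1 - projR X) * X2 X).mulVec (R⁻¹.mulVec z) = R.mulVec z := by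
    rw [mulVec_mulVec]
    conv_lhs => rw [← t2]
    rw [Matrix.mul_assoc, t3, Matrix.mul_one]
  have hU := (aux_betaU X hX Y (R⁻¹.mulVec z) (by rw [hSq, hz])).2
  have hcross : (projR X).mulVec Y ⬝ᵥ ((1 - projR X) * X2 X).mulVec (R⁻¹.mulVec z) = 0 := by
    conv_lhs => rw [← aux_P_transpose X]
    rw [aux_adj, mulVec_mulVec (R⁻¹.mulVec z), ← Matrix.mul_assoc, aux_P_transpose,
      Matrix.mul_sub, aux_P_P X hX]
    simp
  have hsq : ((1 - projR X) * X2 X).mulVec (R⁻¹.mulVec z) ⬝ᵥ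
      ((1 - projR X) * X2 X).mulVec (R⁻¹.mulVec z) = z ⬝ᵥ z := by
    rw [← aux_adj, mulVec_mulVec (R⁻¹.mulVec z), ← aux_S_eq X hX, hSq]
    have := aux_adj R z (R⁻¹.mulVec z)
    rw [t1] at this
    rw [this, mulVec_mulVec, t3, one_mulVec]
  have hz2 : enorm2 z ^ 2 = z ⬝ᵥ z := by
    unfold enorm2
    rw [Real.sq_sqrt (Finset.sum_nonneg fun i _ => sq_nonneg _)]
    simp [dotProduct, sq]
  rw [rR, rU, aux_quad, aux_quad, aux_XbetaR, hU, add_dotProduct, dotProduct_add, dotProduct_add,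
    hsq, hcross, (dotProduct_comm _ _).trans hcross, hz2]
  ring

lemma aux_lam (hX : X.rank = k₁ + k₂) (α σ : ℝ) (hσ : 0 < σ) (Y : Fin n → ℝ) (z : Fin k₂ → ℝ)
    (hz : (msqrt ((X2 X)ᵀ * (1 - projR X) * X2 X)).mulVec z =
      ((X2 X)ᵀ * (1 - projR X)).mulVec Y) :
    1 - lamHat α (σ ^ 2) X Y = (1 + Real.exp (2 * α * k₂) *
      Real.exp (-α * (enorm2 z) ^ 2 / σ ^ 2))⁻¹ := by
  have h := aux_risk X hX (σ ^ 2) Y z hz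
  have hR : rR X (σ ^ 2) Y = rU X (σ ^ 2) Y + (enorm2 z ^ 2 - 2 * σ ^ 2 * k₂) := by linarith
  have e : Real.exp (-(α * rR X (σ ^ 2) Y) / σ ^ 2) =
      Real.exp (-(α * rU X (σ ^ 2) Y) / σ ^ 2) *
        (Real.exp (2 * α * k₂) * Real.exp (-α * (enorm2 z) ^ 2 / σ ^ 2)) := by
    rw [← Real.exp_add, ← Real.exp_add, hR]
    congr 1
    field_simp
    ring
  rw [lamHat, e]
  have p1 := Real.exp_pos (-(α * rU X (σ ^ 2) Y) / σ ^ 2)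
  have p2 := mul_pos (Real.exp_pos (2 * α * k₂)) (Real.exp_pos (-α * (enorm2 z) ^ 2 / σ ^ 2))
  generalize Real.exp (2 * α * k₂) * Real.exp (-α * (enorm2 z) ^ 2 / σ ^ 2) = E at *
  generalize Real.exp (-(α * rU X (σ ^ 2) Y) / σ ^ 2) = F at *
  field_simp
  ring

lemma aux_pointwise (hX : X.rank = k₁ + k₂) (β : Fin k₁ ⊕ Fin k₂ → ℝ) (α σ : ℝ) (hσ : 0 < σ)
    (u : Fin n → ℝ) :
    Real.sqrt n • (mavg α (σ ^ 2) X (X.mulVec β + u) - β) =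
      (fun Z : (Fin k₁ → ℝ) × (Fin k₂ → ℝ) =>
          (fromRows (((X1 X)ᵀ * X1 X)⁻¹ * (X1 X)ᵀ * X2 X) (-1)).mulVec
              (Real.sqrt n • (β ∘ Sum.inr)) +
          (fromRows (msqrt ((X1 X)ᵀ * X1 X))⁻¹ 0).mulVec (Real.sqrt n • Z.1) +
          (1 + Real.exp (2 * α * k₂) *
              Real.exp (-α * (enorm2 (Z.2 +
                (msqrt ((X2 X)ᵀ * (1 - projR X) * X2 X)).mulVec (β ∘ Sum.inr))) ^ 2 /
                σ ^ 2))⁻¹ •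
            ((fromRows (-(((X1 X)ᵀ * X1 X)⁻¹ * (X1 X)ᵀ * X2 X *
                  (msqrt ((X2 X)ᵀ * (1 - projR X) * X2 X))⁻¹))
                ((msqrt ((X2 X)ᵀ * (1 - projR X) * X2 X))⁻¹)).mulVec (Real.sqrt n • Z.2) -
              (fromRows (((X1 X)ᵀ * X1 X)⁻¹ * (X1 X)ᵀ * X2 X) (-1)).mulVec
                (Real.sqrt n • (β ∘ Sum.inr))))
        (((msqrt ((X1 X)ᵀ * X1 X))⁻¹ * (X1 X)ᵀ).mulVec u,
          ((msqrt ((X2 X)ᵀ * (1 - projR X) * X2 X))⁻¹ *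
            ((X2 X)ᵀ * (1 - projR X))).mulVec u) := by
  have hG := aux_posDef1 _ (aux_X1_inj X hX)
  obtain ⟨s1, s2, s3, s4⟩ := aux_msqrt hG
  obtain ⟨g1, g2⟩ := aux_inv hG
  obtain ⟨t1, t2, t3, t4⟩ := aux_msqrt (aux_S_posDef X hX)
  have hR1 : (msqrt ((X1 X)ᵀ * X1 X))⁻¹ * (msqrt ((X1 X)ᵀ * X1 X))⁻¹ = ((X1 X)ᵀ * X1 X)⁻¹ := by
    rw [← Matrix.mul_inv_rev, s2]
  dsimp only
  set R1 := msqrt ((X1 X)ᵀ * X1 X)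
  set R := msqrt ((X2 X)ᵀ * (1 - projR X) * X2 X)
  set Y := X.mulVec β + u with hY
  set w := (R⁻¹ * ((X2 X)ᵀ * (1 - projR X))).mulVec u with hw
  have hXβ : X.mulVec β = (X1 X).mulVec (β ∘ Sum.inl) + (X2 X).mulVec (β ∘ Sum.inr) := by
    rw [← aux_X_mulVec, Sum.elim_comp_inl_inr]
  have hAM : (1 - projR X) * X1 X = 0 := by
    rw [Matrix.sub_mul, aux_P_X1 X hX]; simp
  have hz : R.mulVec (w + R.mulVec (β ∘ Sum.inr)) = ((X2 X)ᵀ * (1 - projR X)).mulVec Y := by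
    rw [mulVec_add, hw, mulVec_mulVec, mulVec_mulVec, ← Matrix.mul_assoc R, t3, Matrix.one_mul, t2,
      hY, mulVec_add, hXβ, mulVec_add, mulVec_mulVec, mulVec_mulVec, Matrix.mul_assoc _ _ (X1 X),
      hAM]
    simp [add_comm]
  have hq : R⁻¹.mulVec (w + R.mulVec (β ∘ Sum.inr)) = R⁻¹.mulVec w + β ∘ Sum.inr := by
    rw [mulVec_add, mulVec_mulVec (β ∘ Sum.inr), t4, one_mulVec]
  have hSq : ((X2 X)ᵀ * (1 - projR X) * X2 X).mulVec (R⁻¹.mulVec w + β ∘ Sum.inr) =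
      ((X2 X)ᵀ * (1 - projR X)).mulVec Y := by
    rw [← hz, ← hq, mulVec_mulVec]
    conv_lhs => rw [← t2]
    rw [Matrix.mul_assoc, t3, Matrix.mul_one]
  have hU := (aux_betaU X hX Y _ hSq).1
  have hl := aux_lam X hX α σ hσ Y _ hz
  have hR : betaR X Y = Sum.elim ((((X1 X)ᵀ * X1 X)⁻¹ * (X1 X)ᵀ).mulVec Y) 0 := by
    rw [← mulVec_mulVec]; rfl
  have hAY : (((X1 X)ᵀ * X1 X)⁻¹ * (X1 X)ᵀ).mulVec Y = β ∘ Sum.inl +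
      (((X1 X)ᵀ * X1 X)⁻¹ * (X1 X)ᵀ * X2 X).mulVec (β ∘ Sum.inr) +
      R1⁻¹.mulVec ((R1⁻¹ * (X1 X)ᵀ).mulVec u) := by
    rw [hY, mulVec_add, hXβ, mulVec_add, mulVec_mulVec, mulVec_mulVec, Matrix.mul_assoc _ _ (X1 X),
      g2, one_mulVec, mulVec_mulVec, ← Matrix.mul_assoc R1⁻¹, hR1]
  rw [← hl, mavg]
  have hl2 : lamHat α (σ ^ 2) X Y = 1 - (1 - lamHat α (σ ^ 2) X Y) := by ring
  rw [hl2]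
  generalize 1 - lamHat α (σ ^ 2) X Y = m
  rw [hU, hR, hAY]
  generalize (R1⁻¹ * (X1 X)ᵀ).mulVec u = z1
  generalize ((X1 X)ᵀ * X1 X)⁻¹ * (X1 X)ᵀ * X2 X = K
  simp only [fromRows_mulVec, mulVec_smul, neg_mulVec, one_mulVec, mulVec_add, ← mulVec_mulVec,
    zero_mulVec]
  ext i
  cases i <;> simp <;> ring

lemma aux_meas (α σ2 : ℝ) : Measurable (mavg α σ2 X) := by
  have hU : Continuous (betaU X) :=
    Continuous.matrix_mulVec continuous_const (Continuous.matrix_mulVec continuous_const continuous_id)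
  have hR : Continuous (betaR X) := by
    refine continuous_pi fun i => ?_
    cases i with
    | inl i => exact (continuous_apply i).comp (Continuous.matrix_mulVec continuous_const
        (Continuous.matrix_mulVec continuous_const continuous_id))
    | inr i => exact continuous_const
  have hrR : Continuous (rR X σ2) := by
    unfold rR
    exact ((continuous_id.dotProduct continuous_id).sub
      (hR.dotProduct (continuous_const.matrix_mulVec hR))).add continuous_const
  have hrU : Continuous (rU X σ2) := by
    unfold rU
    exact ((continuous_id.dotProduct continuous_id).sub
      (hU.dotProduct (continuous_const.matrix_mulVec hU))).add continuous_const
  have hl : Measurable (lamHat α σ2 X) := by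
    have a := hrR.measurable
    have b := hrU.measurable
    unfold lamHat
    fun_prop
  have a := hR.measurable
  have b := hU.measurable
  exact (hl.smul a).add ((measurable_const.sub hl).smul b)

end

/-- the distribution of `√n(β̃ − β)` under `P_{n,β,σ}` equals the distribution of
`B_n√n β₂ + C_n√n Z₁ + [1 + exp(2αk₂) exp(−α‖Z₂ + (X₂'(I−P_R)X₂)^{1/2}β₂‖²/σ²)]⁻¹
  · (D_n√n Z₂ − B_n√n β₂)` with `Z₁ ~ N(0, σ²I_{k₁})`, `Z₂ ~ N(0, σ²I_{k₂})` independent. -/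
theorem statement1 {n k₁ k₂ : ℕ} (hk₁ : 0 < k₁) (hk₂ : 0 < k₂) (hn : k₁ + k₂ ≤ n)
    (X : Matrix (Fin n) (Fin k₁ ⊕ Fin k₂) ℝ) (hX : X.rank = k₁ + k₂)
    (β : (Fin k₁ ⊕ Fin k₂) → ℝ) (σ α : ℝ) (hσ : 0 < σ) (hα : 0 < α) :
    (Pmeas X β (σ ^ 2)).map (fun Y => Real.sqrt n • (mavg α (σ ^ 2) X Y - β)) =
      (((gaussPi (Fin k₁) (σ ^ 2)).prod (gaussPi (Fin k₂) (σ ^ 2))).map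
        (fun Z : (Fin k₁ → ℝ) × (Fin k₂ → ℝ) =>
          (fromRows (((X1 X)ᵀ * X1 X)⁻¹ * (X1 X)ᵀ * X2 X) (-1)).mulVec
              (Real.sqrt n • (β ∘ Sum.inr)) +
          (fromRows (msqrt ((X1 X)ᵀ * X1 X))⁻¹ 0).mulVec (Real.sqrt n • Z.1) +
          (1 + Real.exp (2 * α * k₂) *
              Real.exp (-α * (enorm2 (Z.2 +
                (msqrt ((X2 X)ᵀ * (1 - projR X) * X2 X)).mulVec (β ∘ Sum.inr))) ^ 2 /
                σ ^ 2))⁻¹ •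
            ((fromRows (-(((X1 X)ᵀ * X1 X)⁻¹ * (X1 X)ᵀ * X2 X *
                  (msqrt ((X2 X)ᵀ * (1 - projR X) * X2 X))⁻¹))
                ((msqrt ((X2 X)ᵀ * (1 - projR X) * X2 X))⁻¹)).mulVec (Real.sqrt n • Z.2) -
              (fromRows (((X1 X)ᵀ * X1 X)⁻¹ * (X1 X)ᵀ * X2 X) (-1)).mulVec
                (Real.sqrt n • (β ∘ Sum.inr))))) := by
  have hG := aux_posDef1 _ (aux_X1_inj X hX)
  obtain ⟨s1, s2, s3, s4⟩ := aux_msqrt hG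
  obtain ⟨t1, t2, t3, t4⟩ := aux_msqrt (aux_S_posDef X hX)
  have hmap := aux_map σ hσ ((msqrt ((X1 X)ᵀ * X1 X))⁻¹ * (X1 X)ᵀ)
    ((msqrt ((X2 X)ᵀ * (1 - projR X) * X2 X))⁻¹ * ((X2 X)ᵀ * (1 - projR X)))
    (by
      rw [transpose_mul, transpose_transpose, transpose_nonsing_inv, s1, Matrix.mul_assoc,
        ← Matrix.mul_assoc (X1 X)ᵀ]
      nth_rewrite 2 [← s2]
      rw [Matrix.mul_assoc, s3, Matrix.mul_one, s4])
    (by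
      have e : ((X2 X)ᵀ * (1 - projR X)) * ((1 - projR X) * X2 X) =
          (X2 X)ᵀ * (1 - projR X) * X2 X := by
        rw [aux_S_eq X hX, transpose_mul, aux_Mt]
      rw [transpose_mul, transpose_mul, transpose_transpose, transpose_nonsing_inv, t1, aux_Mt]
      generalize msqrt ((X2 X)ᵀ * (1 - projR X) * X2 X) = R at t1 t2 t3 t4 ⊢
      rw [Matrix.mul_assoc, ← Matrix.mul_assoc ((X2 X)ᵀ * (1 - projR X)), e, ← t2,
        Matrix.mul_assoc R, t3, Matrix.mul_one, t4])
    (by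
      rw [transpose_mul, transpose_mul, transpose_transpose, aux_Mt,
        Matrix.mul_assoc, ← Matrix.mul_assoc (X1 X)ᵀ, ← Matrix.mul_assoc (X1 X)ᵀ,
        Matrix.mul_sub, aux_X1t_P X hX]
      simp)
  have hme := aux_meas X α (σ ^ 2)
  have hc : ∀ {ι κ : Type} [Fintype ι] [Fintype κ] (A : Matrix ι κ ℝ), Continuous A.mulVec :=
    fun A => Continuous.matrix_mulVec continuous_const continuous_id
  rw [Pmeas, Measure.map_map (by fun_prop) (by fun_prop), ← hmap, Measure.map_map]
  · congr 1
    funext u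
    exact aux_pointwise X hX β α σ hσ u
  · have he : Measurable (enorm2 : (Fin k₂ → ℝ) → ℝ) := by
      unfold enorm2
      fun_prop
    have h1 := fun {ι κ : Type} [Fintype ι] [Fintype κ] (A : Matrix ι κ ℝ) => (hc A).measurable
    refine Measurable.add
      (measurable_const.add ((h1 _).comp (measurable_fst.const_smul (Real.sqrt n)))) ?_
    apply Measurable.fun_smul
    · fun_prop
    · exact ((h1 _).comp (measurable_snd.const_smul (Real.sqrt n))).sub measurable_const
  · exact (hc _).measurable.prodMk (hc _).measurable

end
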